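/- For every integer m ≥ 8, f(3^m, 4) ≥ ⌈(m+1)/4⌉. -/

import Mathlib

/-!
The continuant of `l` is the top-left entry of the product `contMat l` of the symmetric matrices
`[[a, 1], [1, 0]]`, so reversing `l` transposes `contMat l`. For a word `w` put
`(a, b) = (2, 1) * contMat w`. Then `⟨2, w, 2⟩ = 2a + b =: K`, and folding `w` around a middle
block `c` gives `⟨2, w, c, wᴿ, 2⟩ = (a, b) * contMat c * (a, b)ᵀ`. For `c = 3,1` or `1,3` this
quadratic form is `(2a + b)² = K²`, and for `c = 2,2,1,1` or `1,1,2,2` it is `3 (2a + b)² = 3 K²`.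

Let `C m` be the number of words `w` over `{1, 2, 3}` with `⟨2, w, 2⟩ = 3 ^ m`. Folding with the two
available blocks yields `C (2k) ≥ 2 C k` and `C (2k + 1) ≥ 2 C k`; with a witness for each of
`m = 4, 5, 6, 7`, induction gives `16 * C m ≥ m + 1` for `m ≥ 4`. Finally, replacing an outer `2`
by `1, 1` does not change the continuant, so each `w` accounts for four sequences, and
`f (3 ^ m) 4 ≥ 4 * C m ≥ (m + 1) / 4`.
-/

/-- The continuant of a finite sequence of positive integers. -/
def continuant : List ℕ → ℕ
  | [] => 1
  | [a] => a
  | a :: b :: t => a * continuant (b :: t) + continuant t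

/-- `f d N` is the number of finite sequences of positive integers, all entries `< N`,
whose continuant equals `d`. -/
noncomputable def f (d N : ℕ) : ℕ :=
  Set.ncard {l : List ℕ | (∀ x ∈ l, 0 < x ∧ x < N) ∧ continuant l = d}

/-- `lam` is the largest real root of the real function `p`. -/
def IsGreatestRoot (p : ℝ → ℝ) (lam : ℝ) : Prop :=
  p lam = 0 ∧ ∀ x : ℝ, p x = 0 → x ≤ lam

/-- The product of the matrices `[[a, 1], [1, 0]]` over the entries `a` of a list. -/
def contMat (l : List ℕ) : Matrix (Fin 2) (Fin 2) ℕ :=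
  (l.map (fun a => !![a, 1; 1, 0])).prod

theorem contMat_append (l l' : List ℕ) : contMat (l ++ l') = contMat l * contMat l' := by
  simp [contMat]

theorem contMat_cons (a : ℕ) (l : List ℕ) :
    contMat (a :: l) = !![a, 1; 1, 0] * contMat l := by
  simp [contMat]

theorem contMat_nil : contMat [] = 1 := by simp [contMat]

theorem contMat_reverse (l : List ℕ) : contMat l.reverse = (contMat l).transpose := by
  induction l with
  | nil => simp [contMat]
  | cons a t ih =>
    have h : (!![a, 1; 1, 0] : Matrix (Fin 2) (Fin 2) ℕ).transpose = !![a, 1; 1, 0] := by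
      ext i j; fin_cases i <;> fin_cases j <;> rfl
    rw [List.reverse_cons, contMat_append, ih, contMat_cons a t, Matrix.transpose_mul, h,
      contMat_cons, contMat_nil, mul_one]

theorem continuant_eq (l : List ℕ) : continuant l = contMat l 0 0 := by
  induction l using continuant.induct with
  | case1 => simp [continuant, contMat]
  | case2 a => simp [continuant, contMat]
  | case3 a b t ih1 ih2 =>
    rw [continuant, ih1, ih2, contMat_cons a, contMat_cons b]
    simp [Matrix.mul_apply, Matrix.vecMul,
      dotProduct, Fin.sum_univ_two]

/-- The two blocks giving the square of a continuant when used as the middle of a fold. -/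
def evenMid (b : Bool) : List ℕ := if b then [3, 1] else [1, 3]

/-- The two blocks giving three times the square of a continuant when used as the middle of a
fold. -/
def oddMid (b : Bool) : List ℕ := if b then [2, 2, 1, 1] else [1, 1, 2, 2]

theorem continuant_two_two (w : List ℕ) : continuant ([2] ++ w ++ [2]) =
    2 * (2 * contMat w 0 0 + contMat w 1 0) + (2 * contMat w 0 1 + contMat w 1 1) := by
  simp only [continuant_eq, contMat_append, contMat_cons, contMat_nil]
  simp [Matrix.mul_apply, Matrix.vecMul,
      dotProduct, Fin.sum_univ_two]
  ring

theorem continuant_evenFold (w : List ℕ) (b : Bool) :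
    continuant ([2] ++ (w ++ evenMid b ++ w.reverse) ++ [2]) =
      continuant ([2] ++ w ++ [2]) ^ 2 := by
  rw [continuant_two_two w]
  simp only [continuant_eq, contMat_append, contMat_reverse]
  cases b <;> simp [evenMid, contMat_cons, contMat_nil, Matrix.mul_apply, Matrix.vecMul,
      dotProduct, Fin.sum_univ_two] <;> ring

theorem continuant_oddFold (w : List ℕ) (b : Bool) :
    continuant ([2] ++ (w ++ oddMid b ++ w.reverse) ++ [2]) =
      3 * continuant ([2] ++ w ++ [2]) ^ 2 := by
  rw [continuant_two_two w]
  simp only [continuant_eq, contMat_append, contMat_reverse]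
  cases b <;> simp [oddMid, contMat_cons, contMat_nil, Matrix.mul_apply, Matrix.vecMul,
      dotProduct, Fin.sum_univ_two] <;> ring

/-- `w` has all its entries in `{1, 2, 3}`, and `⟨2, w, 2⟩ = 3 ^ m`. -/
def Good (m : ℕ) (w : List ℕ) : Prop :=
  (∀ x ∈ w, 0 < x ∧ x < 4) ∧ continuant ([2] ++ w ++ [2]) = 3 ^ m

theorem Good.evenFold {m : ℕ} {w : List ℕ} (h : Good m w) (b : Bool) :
    Good (2 * m) (w ++ evenMid b ++ w.reverse) := by
  refine ⟨fun x hx => ?_, ?_⟩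
  · simp only [List.mem_append, List.mem_reverse] at hx
    rcases hx with (hx | hx) | hx
    · exact h.1 x hx
    · revert x; cases b <;> simp [evenMid]
    · exact h.1 x hx
  · rw [continuant_evenFold, h.2]; ring

theorem Good.oddFold {m : ℕ} {w : List ℕ} (h : Good m w) (b : Bool) :
    Good (2 * m + 1) (w ++ oddMid b ++ w.reverse) := by
  refine ⟨fun x hx => ?_, ?_⟩
  · simp only [List.mem_append, List.mem_reverse] at hx
    rcases hx with (hx | hx) | hx
    · exact h.1 x hx
    · revert x; cases b <;> simp [oddMid]
    · exact h.1 x hx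
  · rw [continuant_oddFold, h.2]; ring

/-- If the blocks `mid b` are distinct and of one length, the fold determines both the word and the
block: its length gives the length of the word, which is a prefix. -/
theorem fold_injective {mid : Bool → List ℕ} (hinj : Function.Injective mid)
    (hlen : ∀ b b', (mid b).length = (mid b').length) :
    Function.Injective (fun p : List ℕ × Bool => p.1 ++ mid p.2 ++ p.1.reverse) := by
  rintro ⟨w, b⟩ ⟨w', b'⟩ h
  simp only [List.append_assoc] at h
  have hl := congrArg List.length h
  have hb := hlen b b'
  simp only [List.length_append, List.length_reverse] at hl
  obtain ⟨h1, h2⟩ := List.append_inj h (by omega)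
  subst h1
  rw [hinj (List.append_inj h2 hb).1]

theorem exists_many_good (m : ℕ) (hm : 4 ≤ m) :
    ∃ S : Finset (List ℕ), (∀ w ∈ S, Good m w) ∧ m + 1 ≤ 16 * S.card := by
  induction m using Nat.strong_induction_on with
  | _ m ih =>
    by_cases h8 : m < 8
    · have key : ∃ w, Good m w := by
        interval_cases m
        · exact ⟨[1, 1, 1, 1, 2], by simp, by simp [continuant]⟩
        · exact ⟨[1, 1, 1, 3, 1, 2], by simp, by simp [continuant]⟩
        · exact ⟨[1, 1, 2, 1, 3, 1, 3], by simp, by simp [continuant]⟩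
        · exact ⟨[1, 2, 2, 1, 2, 3, 2, 1], by simp, by simp [continuant]⟩
      obtain ⟨w, hw⟩ := key
      exact ⟨{w}, by simpa using hw, by simp; omega⟩
    · obtain ⟨S, hS, hcard⟩ := ih (m / 2) (by omega) (by omega)
      rcases Nat.even_or_odd' m with ⟨k, hk | hk⟩
      · have hk2 : m / 2 = k := by omega
        rw [hk2] at hS hcard
        have hinj := fold_injective (mid := evenMid) (by decide) (by decide)
        refine ⟨(S ×ˢ Finset.univ).map ⟨_, hinj⟩, ?_, ?_⟩
        · intro w hw
          obtain ⟨p, hp, rfl⟩ := Finset.mem_map.1 hw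
          rw [hk]
          exact (hS p.1 (Finset.mem_product.1 hp).1).evenFold p.2
        · simp; omega
      · have hk2 : m / 2 = k := by omega
        rw [hk2] at hS hcard
        have hinj := fold_injective (mid := oddMid) (by decide) (by decide)
        refine ⟨(S ×ˢ Finset.univ).map ⟨_, hinj⟩, ?_, ?_⟩
        · intro w hw
          obtain ⟨p, hp, rfl⟩ := Finset.mem_map.1 hw
          rw [hk]
          exact (hS p.1 (Finset.mem_product.1 hp).1).oddFold p.2
        · simp; omega

/-- The two interchangeable ends of a sequence: `2` and `1, 1`. -/
def outer (b : Bool) : List ℕ := if b then [2] else [1, 1]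

theorem continuant_outer (w : List ℕ) (b c : Bool) :
    continuant (outer b ++ w ++ outer c) = continuant ([2] ++ w ++ [2]) := by
  simp only [continuant_eq, contMat_append]
  cases b <;> cases c <;>
    simp [outer, contMat_cons, contMat_nil, Matrix.mul_apply, Matrix.vecMul,
      dotProduct, Fin.sum_univ_two]

theorem outer_injective :
    Function.Injective (fun p : List ℕ × Bool × Bool => outer p.2.1 ++ p.1 ++ outer p.2.2) := by
  rintro ⟨w, b, c⟩ ⟨w', b', c'⟩ h
  have hb : b = b' := by
    have := congrArg List.head? h
    revert this
    cases b <;> cases b' <;> simp [outer]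
  have hc : c = c' := by
    have := congrArg List.getLast? h
    revert this
    cases c <;> cases c' <;> simp [outer]
  subst hb hc
  simpa using h

theorem continuant_pos (l : List ℕ) (h : ∀ x ∈ l, 0 < x) : 0 < continuant l := by
  induction l using continuant.induct with
  | case1 => simp [continuant]
  | case2 a => simpa [continuant] using h
  | case3 a b t ih1 ih2 =>
    rw [continuant]
    have := ih2 (fun x hx => h x (by simp [hx]))
    omega

theorem length_le_continuant (l : List ℕ) (h : ∀ x ∈ l, 0 < x) : l.length ≤ continuant l := by
  induction l using continuant.induct with
  | case1 => simp
  | case2 a => simpa [continuant, Nat.one_le_iff_ne_zero, Nat.pos_iff_ne_zero] using h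
  | case3 a b t ih1 ih2 =>
    rw [continuant, List.length_cons]
    have h1 := ih1 (fun x hx => h x (by simp only [List.mem_cons] at hx ⊢; tauto))
    have h2 := continuant_pos t (fun x hx => h x (by simp [hx]))
    have := Nat.le_mul_of_pos_left (continuant (b :: t)) (h a (by simp))
    omega

theorem finite_sequences (d N : ℕ) :
    {l : List ℕ | (∀ x ∈ l, 0 < x ∧ x < N) ∧ continuant l = d}.Finite := by
  refine ((List.finite_length_le (Fin N) d).image (List.map Fin.val)).subset ?_
  rintro l ⟨h, rfl⟩
  have hl := length_le_continuant l (fun x hx => (h x hx).1)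
  refine ⟨l.pmap Fin.mk (fun x hx => (h x hx).2), ?_, ?_⟩
  · simpa using hl
  · simp [List.map_pmap]

theorem theorem4 (m : ℕ) (hm : 8 ≤ m) :
    (⌈((m : ℝ) + 1) / 4⌉ : ℤ) ≤ (f (3 ^ m) 4 : ℤ) := by
  obtain ⟨S, hS, hcard⟩ := exists_many_good m (by omega)
  have hle : 4 * S.card ≤ f (3 ^ m) 4 := by
    have hc : ((S ×ˢ (Finset.univ : Finset (Bool × Bool))).map ⟨_, outer_injective⟩).card
        = 4 * S.card := by
      simp; omega
    rw [← hc, ← Set.ncard_coe_finset]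
    refine Set.ncard_le_ncard ?_ (finite_sequences _ _)
    intro l hl
    obtain ⟨⟨w, b, c⟩, hp, rfl⟩ := Finset.mem_map.1 (Finset.mem_coe.1 hl)
    have hw := hS w (Finset.mem_product.1 hp).1
    refine ⟨fun x hx => ?_, (continuant_outer w b c).trans hw.2⟩
    have ho : ∀ e, ∀ y ∈ outer e, 0 < y ∧ y < 4 := by decide
    simp only [Function.Embedding.coeFn_mk, List.mem_append] at hx
    rcases hx with (hx | hx) | hx
    · exact ho _ x hx
    · exact hw.1 x hx
    · exact ho _ x hx
  rw [Int.ceil_le, div_le_iff₀ (by norm_num)]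
  have : m + 1 ≤ f (3 ^ m) 4 * 4 := by omega
  exact_mod_cast this
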